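/- Let n ≥ 5 be an integer, g a function satisfying conditions (G), and let u be a C⁴ positive function on ℝⁿ \ {0} satisfying Δ²u(x) = |x|^{−(n+4)/2}·g(|x|^{(n−4)/2}·u(x)) for all x ∈ ℝⁿ \ {0}. Fix z ∈ ℝⁿ \ {0}, let z* = z/|z|², and define u_z*(x) = |x|^{−(n−4)}·u(x/|x|² + z) and k_z(x) = |z*|/(|x|·|x + z*|) for x ∈ ℝⁿ \ {0, −z*}. Then u_z* satisfies Δ²u_z*(x) = k_z(x)^{(n+4)/2}·g(k_z(x)^{−(n−4)/2}·u_z*(x)) for all x ∈ ℝⁿ \ {0, −z*}. In particular (the case z → 0), if u solves the equation then so does u*(x) = |x|^{−(n−4)}·u(x/|x|²) with k₀(x) = |x|^{−1}. -/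

import Mathlib

open Real Filter Set

noncomputable section

/-- The Laplacian of `f : ℝⁿ → ℝ`, as the sum of the second partial derivatives. -/
def lap (n : ℕ) (f : EuclideanSpace ℝ (Fin n) → ℝ) (x : EuclideanSpace ℝ (Fin n)) : ℝ :=
  ∑ i : Fin n,
    fderiv ℝ (fun y => fderiv ℝ f y (EuclideanSpace.single i 1)) x (EuclideanSpace.single i 1)

/-- The Bilaplacian `Δ² = Δ ∘ Δ`. -/
def bilap (n : ℕ) (f : EuclideanSpace ℝ (Fin n) → ℝ) : EuclideanSpace ℝ (Fin n) → ℝ :=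
  lap n (lap n f)

/-- Conditions (G) on the nonlinearity `g`, extended to `[0,∞)` by `g 0 = 0`. -/
def CondG (n : ℕ) (g : ℝ → ℝ) : Prop :=
  ContDiffOn ℝ 1 g (Set.Ioi 0) ∧
  (∀ t > 0, 0 < g t) ∧
  Filter.Tendsto g (nhdsWithin 0 (Set.Ioi 0)) (nhds 0) ∧
  (∀ t > 0, g t / t < deriv g t ∧ deriv g t ≤ (((n : ℝ) + 4) / ((n : ℝ) - 4)) * (g t / t)) ∧
  (∃ β : ℝ, 0 ≤ β ∧ β < (n : ℝ) ^ 2 * ((n : ℝ) - 4) ^ 2 / 16 ∧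
    Filter.Tendsto (deriv g) (nhdsWithin 0 (Set.Ioi 0)) (nhds β)) ∧
  (∃ q c : ℝ, 1 < q ∧ 0 < c ∧ ∀ t ≥ 1, c * t ^ q ≤ g t) ∧
  g 0 = 0

/-!
Write `σ x = x / |x|²`, `K_s f = |x|ˢ f ∘ σ` and `E f = x · ∇f`. Since `Dσ(x)` is `|x|⁻²` times a
reflection, the chain and product rules give
`Δ (K_s f) = K_{s-4} (Δ f) + (s + n - 2) K_{s-2} (M_s f)` with `M_s f = s f - 2 E f`.
From `Δ E = E Δ + 2 Δ` one gets `Δ M_s = M_{s-4} Δ`, so on applying the formula twice with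
`s = 4 - n` the lower-order terms cancel and `Δ² (K_{4-n} f) = K_{-4-n} (Δ² f)`.
If `Δ² f (σ x) = r^{-(n+4)/2} g (r^{(n-4)/2} f (σ x))`, the powers of `|x|` combine with those of
`r` into powers of `k = (|x|² r)⁻¹`; for `f = u (· + z)` one has `r = |σ x + z|`, and the identity
`|σ x + σ w| = |x + w| / (|x| |w|)` with `w = z*` identifies `k` with `k_z`.
-/

open InnerProductSpace EuclideanGeometry Module
open scoped Topology ContDiff Laplacian

section Derivatives

variable {V F : Type*} [NormedAddCommGroup V] [NormedSpace ℝ V] [NormedAddCommGroup F]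
  [NormedSpace ℝ F] {f : V → F} {x : V}

theorem contDiffAt_comp_add_right {m : ℕ∞ω} {z : V} (hf : ContDiffAt ℝ m f (x + z)) :
    ContDiffAt ℝ m (fun y => f (y + z)) x :=
  hf.comp (f := fun y => y + z) x (contDiffAt_id.add contDiffAt_const)

/-- The radial (Euler) derivative `x · ∇f`, the generator of dilations. Radial weights and the
inversion bring first-order terms into the Laplacian only through this operator. -/
def eulerDeriv (f : V → F) (x : V) : F :=
  fderiv ℝ f x x

theorem contDiffAt_eulerDeriv {m : ℕ∞ω} (hf : ContDiffAt ℝ (m + 1) f x) :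
    ContDiffAt ℝ m (eulerDeriv f) x :=
  (hf.fderiv_right le_rfl).clm_apply contDiffAt_id

theorem fderiv_fderiv_fderiv_swap_left (hf : ContDiffAt ℝ 3 f x) (a b c : V) :
    fderiv ℝ (fderiv ℝ (fderiv ℝ f)) x a b c = fderiv ℝ (fderiv ℝ (fderiv ℝ f)) x b a c := by
  have hsymm : IsSymmSndFDerivAt ℝ (fderiv ℝ f) x :=
    (hf.fderiv_right (m := 2) le_rfl).isSymmSndFDerivAt (by simp)
  rw [hsymm.eq]

theorem fderiv_fderiv_fderiv_swap_right (hf : ContDiffAt ℝ 3 f x) (a b c : V) :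
    fderiv ℝ (fderiv ℝ (fderiv ℝ f)) x a b c = fderiv ℝ (fderiv ℝ (fderiv ℝ f)) x a c b := by
  have hD2 : DifferentiableAt ℝ (fderiv ℝ (fderiv ℝ f)) x :=
    ((hf.fderiv_right (m := 2) le_rfl).fderiv_right (m := 1) le_rfl).differentiableAt one_ne_zero
  have hD3 (b c : V) : fderiv ℝ (fun y => fderiv ℝ (fderiv ℝ f) y b c) x a =
      fderiv ℝ (fderiv ℝ (fderiv ℝ f)) x a b c := by
    have := (hD2.hasFDerivAt.clm_apply (hasFDerivAt_const b x)).clm_apply (hasFDerivAt_const c x)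
    simp [this.fderiv]
  have hsymm : (fun y => fderiv ℝ (fderiv ℝ f) y b c) =ᶠ[𝓝 x]
      fun y => fderiv ℝ (fderiv ℝ f) y c b := by
    filter_upwards [hf.eventually (by simp)] with y hfy
    exact (hfy.of_le (m := 2) (by norm_num)).isSymmSndFDerivAt (by simp) b c
  rw [← hD3, hsymm.fderiv_eq, hD3]

end Derivatives

section NormRpow

variable {E : Type*} [NormedAddCommGroup E] [InnerProductSpace ℝ E] {x : E}

theorem contDiffAt_norm_rpow (s : ℝ) (hx : x ≠ 0) {m : ℕ∞ω} :
    ContDiffAt ℝ m (fun y : E => ‖y‖ ^ s) x :=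
  (contDiffAt_norm ℝ hx).rpow_const_of_ne (norm_ne_zero_iff.2 hx)

theorem hasFDerivAt_norm_rpow_of_ne_zero (s : ℝ) (hx : x ≠ 0) :
    HasFDerivAt (fun y : E => ‖y‖ ^ s) ((s * ‖x‖ ^ (s - 2)) • innerSL ℝ x) x := by
  have hpow (y : E) (t : ℝ) : (‖y‖ ^ 2) ^ (t / 2) = ‖y‖ ^ t := by
    rw [← Real.rpow_natCast_mul (norm_nonneg y), Nat.cast_ofNat, mul_div_cancel₀ t two_ne_zero]
  have hsq := (hasStrictFDerivAt_norm_sq x).hasFDerivAt.rpow_const (p := s / 2)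
    (Or.inl (by simpa using hx))
  simp only [hpow] at hsq
  refine hsq.congr_fderiv ?_
  rw [← hpow x (s - 2), sub_div, div_self two_ne_zero]
  module

end NormRpow

section Laplacian

variable {E F G H : Type*} [NormedAddCommGroup E] [InnerProductSpace ℝ E] [FiniteDimensional ℝ E]
  [NormedAddCommGroup F] [NormedSpace ℝ F] [NormedAddCommGroup G] [NormedSpace ℝ G]
  [NormedAddCommGroup H] [NormedSpace ℝ H] {ι : Type*} [Fintype ι] {x : E}

theorem laplacian_eq_sum_fderiv_fderiv (v : OrthonormalBasis ι ℝ E) (f : E → F) (x : E) :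
    Δ f x = ∑ i, fderiv ℝ (fderiv ℝ f) x (v i) (v i) := by
  simp [laplacian_eq_iteratedFDeriv_orthonormalBasis f v, iteratedFDeriv_two_apply]

theorem contDiffAt_laplacian {f : E → F} {m : ℕ∞ω} (hf : ContDiffAt ℝ (m + 2) f x) :
    ContDiffAt ℝ m (Δ f) x := by
  have hD : ContDiffAt ℝ m (fderiv ℝ (fderiv ℝ f)) x :=
    (hf.fderiv_right (m := m + 1) (by rw [add_assoc, one_add_one_eq_two])).fderiv_right le_rfl
  rw [funext (laplacian_eq_sum_fderiv_fderiv (stdOrthonormalBasis ℝ E) f)]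
  exact ContDiffAt.sum fun i _ => (hD.clm_apply contDiffAt_const).clm_apply contDiffAt_const

theorem laplacian_comp_add_right (f : E → F) (z : E) :
    Δ (fun y => f (y + z)) = fun y => Δ f (y + z) := by
  ext y
  simp [laplacian_eq_iteratedFDeriv_stdOrthonormalBasis, iteratedFDeriv_comp_add_right]

theorem laplacian_bilinear (B : F →L[ℝ] G →L[ℝ] H) {p : E → F} {q : E → G}
    (hp : ContDiffAt ℝ 2 p x) (hq : ContDiffAt ℝ 2 q x) (v : OrthonormalBasis ι ℝ E) :
    Δ (fun y => B (p y) (q y)) x = B (Δ p x) (q x)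
      + (2 : ℝ) • ∑ i, B (fderiv ℝ p x (v i)) (fderiv ℝ q x (v i)) + B (p x) (Δ q x) := by
  have hDp : DifferentiableAt ℝ (fderiv ℝ p) x :=
    (hp.fderiv_right (m := 1) le_rfl).differentiableAt one_ne_zero
  have hDq : DifferentiableAt ℝ (fderiv ℝ q) x :=
    (hq.fderiv_right (m := 1) le_rfl).differentiableAt one_ne_zero
  have hD : fderiv ℝ (fun y => B (p y) (q y)) =ᶠ[𝓝 x] fun y =>
      B.precompR E (p y) (fderiv ℝ q y) + B.precompL E (fderiv ℝ p y) (q y) := by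
    filter_upwards [hp.eventually (by simp), hq.eventually (by simp)] with y hpy hqy
    exact B.fderiv_of_bilinear (hpy.differentiableAt two_ne_zero)
      (hqy.differentiableAt two_ne_zero)
  have hD2 := ((B.precompR E).hasFDerivAt_of_bilinear
    (hp.differentiableAt two_ne_zero).hasFDerivAt hDq.hasFDerivAt).fun_add
    ((B.precompL E).hasFDerivAt_of_bilinear hDp.hasFDerivAt
    (hq.differentiableAt two_ne_zero).hasFDerivAt)
  simp only [laplacian_eq_sum_fderiv_fderiv v, hD.fderiv_eq, map_sum, Finset.smul_sum,
    sum_apply, ← Finset.sum_add_distrib]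
  refine Finset.sum_congr rfl fun i _ => ?_
  rw [hD2.fderiv]
  simp only [ContinuousLinearMap.precompR_apply, ContinuousLinearMap.compL_apply, add_apply,
    ContinuousLinearMap.comp_apply, ContinuousLinearMap.precompL_apply]
  module

theorem laplacian_comp {f : G → F} {h : E → G} (hf : ContDiffAt ℝ 2 f (h x))
    (hh : ContDiffAt ℝ 2 h x) (v : OrthonormalBasis ι ℝ E) :
    Δ (f ∘ h) x = ∑ i, fderiv ℝ (fderiv ℝ f) (h x) (fderiv ℝ h x (v i)) (fderiv ℝ h x (v i))
      + fderiv ℝ f (h x) (Δ h x) := by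
  have hDf : DifferentiableAt ℝ (fderiv ℝ f) (h x) :=
    (hf.fderiv_right (m := 1) le_rfl).differentiableAt one_ne_zero
  have hDh : DifferentiableAt ℝ (fderiv ℝ h) x :=
    (hh.fderiv_right (m := 1) le_rfl).differentiableAt one_ne_zero
  have hD : fderiv ℝ (f ∘ h) =ᶠ[𝓝 x] fun y => (fderiv ℝ f (h y)).comp (fderiv ℝ h y) := by
    filter_upwards [hh.continuousAt.eventually (hf.eventually (by simp)),
      hh.eventually (by simp)] with y hfy hhy
    exact fderiv_comp y (hfy.differentiableAt two_ne_zero) (hhy.differentiableAt two_ne_zero)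
  have hDfh : HasFDerivAt (fun y => fderiv ℝ f (h y)) _ x :=
    hDf.hasFDerivAt.comp x (hh.differentiableAt two_ne_zero).hasFDerivAt
  have hD2 := hDfh.clm_comp hDh.hasFDerivAt
  simp only [laplacian_eq_sum_fderiv_fderiv v, hD.fderiv_eq, map_sum, ← Finset.sum_add_distrib]
  refine Finset.sum_congr rfl fun i _ => ?_
  rw [hD2.fderiv]
  simp [add_comm]

theorem laplacian_comp_of_fderiv_eq_smul_isometry {E' : Type*} [NormedAddCommGroup E']
    [InnerProductSpace ℝ E'] [FiniteDimensional ℝ E'] {f : E' → F} {h : E → E'}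
    (hf : ContDiffAt ℝ 2 f (h x)) (hh : ContDiffAt ℝ 2 h x) {c : ℝ} {A : E ≃ₗᵢ[ℝ] E'}
    (hA : fderiv ℝ h x = c • (A : E →L[ℝ] E')) :
    Δ (f ∘ h) x = c ^ 2 • Δ f (h x) + fderiv ℝ f (h x) (Δ h x) := by
  let v := stdOrthonormalBasis ℝ E
  rw [laplacian_comp hf hh v, laplacian_eq_sum_fderiv_fderiv (v.map A), hA, Finset.smul_sum]
  simp [smul_smul, sq]

theorem laplacian_fderiv {f : E → F} (hf : ContDiffAt ℝ 3 f x) :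
    Δ (fderiv ℝ f) x = fderiv ℝ (Δ f) x := by
  have hD2 : DifferentiableAt ℝ (fderiv ℝ (fderiv ℝ f)) x :=
    ((hf.fderiv_right (m := 2) le_rfl).fderiv_right (m := 1) le_rfl).differentiableAt one_ne_zero
  let v := stdOrthonormalBasis ℝ E
  have hDΔ := HasFDerivAt.fun_sum (u := Finset.univ) fun i _ =>
    (hD2.hasFDerivAt.clm_apply (hasFDerivAt_const (v i) x)).clm_apply (hasFDerivAt_const (v i) x)
  rw [← funext (laplacian_eq_sum_fderiv_fderiv v f)] at hDΔ
  ext w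
  rw [hDΔ.fderiv, laplacian_eq_sum_fderiv_fderiv v]
  simp only [sum_apply, ContinuousLinearMap.comp_zero, zero_add, ContinuousLinearMap.flip_apply]
  refine Finset.sum_congr rfl fun i _ => ?_
  rw [fderiv_fderiv_fderiv_swap_right hf, fderiv_fderiv_fderiv_swap_left hf]

theorem laplacian_id : Δ (id : E → E) = 0 := by
  have hD : fderiv ℝ (id : E → E) = fun _ => .id ℝ E := funext fun _ => fderiv_id
  ext x
  simp [laplacian_eq_sum_fderiv_fderiv (stdOrthonormalBasis ℝ E), hD]

theorem laplacian_eulerDeriv {f : E → F} (hf : ContDiffAt ℝ 3 f x) :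
    Δ (eulerDeriv f) x = eulerDeriv (Δ f) x + (2 : ℝ) • Δ f x := by
  have := laplacian_bilinear (ContinuousLinearMap.id ℝ (E →L[ℝ] F))
    (hf.fderiv_right (m := 2) le_rfl) contDiffAt_id (stdOrthonormalBasis ℝ E)
  simp only [ContinuousLinearMap.id_apply, id_eq, laplacian_fderiv hf, fderiv_id,
    ← laplacian_eq_sum_fderiv_fderiv, laplacian_id, Pi.zero_apply, map_zero, add_zero] at this
  exact this

theorem laplacian_smul_sub_two_smul_eulerDeriv (s : ℝ) {f : E → F} (hf : ContDiffAt ℝ 3 f x) :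
    Δ (s • f - (2 : ℝ) • eulerDeriv f) x = ((s - 4) • Δ f - (2 : ℝ) • eulerDeriv (Δ f)) x := by
  have hf2 : ContDiffAt ℝ 2 f x := hf.of_le (by norm_num)
  have hE : ContDiffAt ℝ 2 (eulerDeriv f) x := contDiffAt_eulerDeriv (hf.of_le (by norm_num))
  have hsf : ContDiffAt ℝ 2 (s • f) x := hf2.const_smul s
  have h2E : ContDiffAt ℝ 2 ((2 : ℝ) • eulerDeriv f) x := hE.const_smul 2
  rw [hsf.laplacian_sub h2E, laplacian_smul s hf2, laplacian_smul 2 hE, laplacian_eulerDeriv hf]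
  simp only [Pi.sub_apply, Pi.smul_apply]
  module

theorem laplacian_norm_rpow (s : ℝ) (hx : x ≠ 0) :
    Δ (fun y : E => ‖y‖ ^ s) x = s * (s + finrank ℝ E - 2) * ‖x‖ ^ (s - 2) := by
  have hD : fderiv ℝ (fun y : E => ‖y‖ ^ s) =ᶠ[𝓝 x]
      fun y => (s * ‖y‖ ^ (s - 2)) • innerSL ℝ y := by
    filter_upwards [isOpen_ne.mem_nhds hx] with y hy
    exact (hasFDerivAt_norm_rpow_of_ne_zero s hy).fderiv
  have hD2 := ((hasFDerivAt_norm_rpow_of_ne_zero (s - 2) hx).const_mul s).fun_smul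
    (innerSL ℝ : E →L[ℝ] E →L[ℝ] ℝ).hasFDerivAt
  let v := stdOrthonormalBasis ℝ E
  have hsecond (i) : fderiv ℝ (fderiv ℝ fun y : E => ‖y‖ ^ s) x (v i) (v i) =
      s * ‖x‖ ^ (s - 2) + s * (s - 2) * ‖x‖ ^ (s - 2 - 2) * inner ℝ x (v i) ^ 2 := by
    rw [hD.fderiv_eq, hD2.fderiv]
    simp only [add_apply, smul_apply, ContinuousLinearMap.smulRight_apply, innerSL_apply_apply ℝ,
      smul_eq_mul, real_inner_self_eq_norm_sq, v.norm_eq_one, one_pow, mul_one]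
    ring
  have hpow : ‖x‖ ^ (s - 2 - 2) * ‖x‖ ^ 2 = ‖x‖ ^ (s - 2) := by
    rw [← Real.rpow_two, ← Real.rpow_add (norm_pos_iff.2 hx), sub_add_cancel]
  simp only [laplacian_eq_sum_fderiv_fderiv v, hsecond, Finset.sum_add_distrib, Finset.sum_const,
    Finset.card_univ, Fintype.card_fin, nsmul_eq_mul, ← Finset.mul_sum, v.sum_sq_inner_left]
  linear_combination s * (s - 2) * hpow

theorem laplacian_norm_rpow_smul (s : ℝ) {h : E → F} (hx : x ≠ 0)
    (hh : ContDiffAt ℝ 2 h x) :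
    Δ (fun y => ‖y‖ ^ s • h y) x = ‖x‖ ^ s • Δ h x + (2 * s * ‖x‖ ^ (s - 2)) • eulerDeriv h x
      + (s * (s + finrank ℝ E - 2) * ‖x‖ ^ (s - 2)) • h x := by
  let v := stdOrthonormalBasis ℝ E
  have hgrad : ∑ i, inner ℝ x (v i) • fderiv ℝ h x (v i) = eulerDeriv h x := by
    simp only [eulerDeriv, ← map_smul, ← map_sum, ← real_inner_comm x, v.sum_repr']
  have := laplacian_bilinear (ContinuousLinearMap.lsmul ℝ ℝ) (contDiffAt_norm_rpow s hx) hh v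
  simp only [ContinuousLinearMap.lsmul_apply, laplacian_norm_rpow s hx,
    (hasFDerivAt_norm_rpow_of_ne_zero s hx).fderiv, smul_apply, coe_innerSL_apply, smul_eq_mul,
    ← smul_smul, ← Finset.smul_sum, hgrad] at this
  rw [this]
  module

end Laplacian

section Inversion

variable {E F : Type*} [NormedAddCommGroup E] [InnerProductSpace ℝ E] [NormedAddCommGroup F]
  [NormedSpace ℝ F] {x : E}

theorem inversion_zero_one_apply (x : E) : inversion 0 1 x = (‖x‖ ^ 2)⁻¹ • x := by
  simp [inversion]

theorem inversion_zero_one_eq_rpow_smul : inversion (0 : E) 1 = fun x => ‖x‖ ^ (-2 : ℝ) • x := by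
  ext x
  rw [inversion_zero_one_apply, Real.rpow_neg (norm_nonneg x), Real.rpow_two]

theorem contDiffAt_inversion_zero_one (hx : x ≠ 0) {m : ℕ∞ω} :
    ContDiffAt ℝ m (inversion (0 : E) 1) x :=
  inversion_zero_one_eq_rpow_smul (E := E) ▸ (contDiffAt_norm_rpow (-2) hx).smul contDiffAt_id

theorem fderiv_inversion_zero_one (hx : x ≠ 0) :
    fderiv ℝ (inversion (0 : E) 1) x = ‖x‖ ^ (-2 : ℝ) • ((ℝ ∙ x)ᗮ.reflection : E →L[ℝ] E) := by
  simp [(hasFDerivAt_inversion hx).fderiv, Real.rpow_neg (norm_nonneg x)]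

theorem eulerDeriv_comp_inversion {f : E → F} (hx : x ≠ 0)
    (hf : DifferentiableAt ℝ f (inversion 0 1 x)) :
    eulerDeriv (f ∘ inversion 0 1) x = -eulerDeriv f (inversion 0 1 x) := by
  have hσ : DifferentiableAt ℝ (inversion (0 : E) 1) x :=
    (hasFDerivAt_inversion hx).differentiableAt
  have hx' : (ℝ ∙ x)ᗮ.reflection x = -x :=
    Submodule.reflection_orthogonalComplement_singleton_eq_neg x
  simp [eulerDeriv, fderiv_comp x hf hσ, fderiv_inversion_zero_one hx, hx',
    congrFun inversion_zero_one_eq_rpow_smul]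

theorem norm_inversion_add_inversion {w : E} (hx : x ≠ 0) (hw : w ≠ 0) :
    ‖inversion 0 1 x + inversion 0 1 w‖ = ‖x + w‖ / (‖x‖ * ‖w‖) := by
  have := dist_inversion_inversion hx (neg_ne_zero.2 hw) 1
  simpa [dist_eq_norm, inversion_zero_one_apply, div_eq_inv_mul, mul_comm] using this

/-- The Kelvin transform `|x|ˢ f(x / |x|²)` with weight exponent `s`. The classical one, which
preserves harmonicity on `ℝⁿ`, has `s = 2 - n`; the biharmonic one has `s = 4 - n`. -/
def kelvinTransform (s : ℝ) (f : E → F) (x : E) : F :=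
  ‖x‖ ^ s • f (inversion 0 1 x)

theorem contDiffAt_kelvinTransform (s : ℝ) {f : E → F} {m : ℕ∞ω} (hx : x ≠ 0)
    (hf : ContDiffAt ℝ m f (inversion 0 1 x)) : ContDiffAt ℝ m (kelvinTransform s f) x :=
  (contDiffAt_norm_rpow s hx).smul (hf.comp x (contDiffAt_inversion_zero_one hx))

end Inversion

section LaplacianKelvin

variable {E F : Type*} [NormedAddCommGroup E] [InnerProductSpace ℝ E] [FiniteDimensional ℝ E]
  [NormedAddCommGroup F] [NormedSpace ℝ F] {f : E → F} {x : E}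

theorem laplacian_inversion_zero_one (hx : x ≠ 0) :
    Δ (inversion (0 : E) 1) x = (2 * (2 - finrank ℝ E) * ‖x‖ ^ (-4 : ℝ)) • x := by
  have hid : eulerDeriv (id : E → E) x = x := by simp [eulerDeriv]
  rw [inversion_zero_one_eq_rpow_smul]
  refine (laplacian_norm_rpow_smul (-2) (h := id) hx contDiffAt_id).trans ?_
  rw [laplacian_id, hid, show (-2 - 2 : ℝ) = -4 by norm_num, Pi.zero_apply, id]
  module

theorem laplacian_comp_inversion (hx : x ≠ 0) (hf : ContDiffAt ℝ 2 f (inversion 0 1 x)) :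
    Δ (f ∘ inversion 0 1) x = ‖x‖ ^ (-4 : ℝ) • Δ f (inversion 0 1 x)
      + (2 * (2 - finrank ℝ E) * ‖x‖ ^ (-2 : ℝ)) • eulerDeriv f (inversion 0 1 x) := by
  have hpow : ‖x‖ ^ (-4 : ℝ) = ‖x‖ ^ (-2 : ℝ) * ‖x‖ ^ (-2 : ℝ) := by
    rw [← Real.rpow_add (norm_pos_iff.2 hx)]
    norm_num
  rw [laplacian_comp_of_fderiv_eq_smul_isometry hf (contDiffAt_inversion_zero_one hx)
    (fderiv_inversion_zero_one hx), laplacian_inversion_zero_one hx, eulerDeriv]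
  nth_rw 5 [inversion_zero_one_eq_rpow_smul]
  simp only [hpow, map_smul]
  module

theorem laplacian_kelvinTransform (s : ℝ) (hx : x ≠ 0)
    (hf : ContDiffAt ℝ 2 f (inversion 0 1 x)) :
    Δ (kelvinTransform s f) x = kelvinTransform (s - 4) (Δ f) x
      + (s + finrank ℝ E - 2) • kelvinTransform (s - 2) (s • f - (2 : ℝ) • eulerDeriv f) x := by
  have hx' : 0 < ‖x‖ := norm_pos_iff.2 hx
  have hΔ := laplacian_norm_rpow_smul s hx (hf.comp x (contDiffAt_inversion_zero_one hx))
  rw [laplacian_comp_inversion hx hf,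
    eulerDeriv_comp_inversion hx (hf.differentiableAt two_ne_zero)] at hΔ
  refine hΔ.trans ?_
  simp only [kelvinTransform, Pi.sub_apply, Pi.smul_apply, Function.comp_apply, sub_eq_add_neg s,
    Real.rpow_add hx']
  module

theorem laplacian_laplacian_kelvinTransform (hx : x ≠ 0)
    (hf : ContDiffAt ℝ 4 f (inversion 0 1 x)) :
    Δ (Δ (kelvinTransform (4 - (finrank ℝ E : ℝ)) f)) x =
      kelvinTransform (-4 - (finrank ℝ E : ℝ)) (Δ (Δ f)) x := by
  set n : ℝ := (finrank ℝ E : ℝ) with hn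
  set h : E → F := (4 - n) • f - (2 : ℝ) • eulerDeriv f
  have hf2 : ContDiffAt ℝ 2 f (inversion 0 1 x) := hf.of_le (by norm_num)
  have hf3 : ContDiffAt ℝ 3 f (inversion 0 1 x) := hf.of_le (by norm_num)
  have hΔf : ContDiffAt ℝ 2 (Δ f) (inversion 0 1 x) :=
    contDiffAt_laplacian (hf.of_le (by norm_num))
  have hh : ContDiffAt ℝ 2 h (inversion 0 1 x) :=
    (hf2.const_smul _).sub ((contDiffAt_eulerDeriv (hf.of_le (by norm_num))).const_smul _)
  have hKh : ContDiffAt ℝ 2 (kelvinTransform (2 - n) h) x := contDiffAt_kelvinTransform _ hx hh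
  have hKh' : ContDiffAt ℝ 2 ((2 : ℝ) • kelvinTransform (2 - n) h) x := hKh.const_smul _
  have hΔK : Δ (kelvinTransform (4 - n) f) =ᶠ[𝓝 x]
      kelvinTransform (-n) (Δ f) + (2 : ℝ) • kelvinTransform (2 - n) h := by
    filter_upwards [(contDiffAt_inversion_zero_one (m := 0) hx).continuousAt.eventually
      (hf2.eventually (by simp)), isOpen_ne.mem_nhds hx] with y hfy hy
    rw [laplacian_kelvinTransform _ hy hfy, Pi.add_apply, Pi.smul_apply]
    congr 3 <;> ring
  rw [(laplacian_congr_nhds hΔK).eq_of_nhds,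
    (contDiffAt_kelvinTransform (-n) hx hΔf).laplacian_add hKh',
    laplacian_smul _ hKh, laplacian_kelvinTransform _ hx hΔf, laplacian_kelvinTransform _ hx hh]
  have hKΔh : kelvinTransform (2 - n - 4) (Δ h) x =
      kelvinTransform (-n - 2) (-n • Δ f - (2 : ℝ) • eulerDeriv (Δ f)) x := by
    rw [kelvinTransform, laplacian_smul_sub_two_smul_eulerDeriv _ hf3, kelvinTransform]
    ring_nf
  rw [hKΔh, ← hn, show -n - 4 = -4 - n by ring]
  module

end LaplacianKelvin

section KelvinEquation

theorem inv_sq_mul_rpow_add_four_div_two {a r : ℝ} (ha : 0 ≤ a) (hr : 0 ≤ r) (d : ℝ) :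
    ((a ^ 2 * r)⁻¹) ^ ((d + 4) / 2) = a ^ (-4 - d) * r ^ (-((d + 4) / 2)) := by
  rw [Real.inv_rpow (by positivity), ← Real.rpow_neg (by positivity),
    Real.mul_rpow (by positivity) hr, ← Real.rpow_natCast_mul ha]
  ring_nf

theorem inv_sq_mul_rpow_neg_sub_four_div_two {a r : ℝ} (ha : 0 < a) (hr : 0 ≤ r) (d : ℝ) :
    ((a ^ 2 * r)⁻¹) ^ (-((d - 4) / 2)) * a ^ (4 - d) = r ^ ((d - 4) / 2) := by
  have hexp : ((2 : ℕ) : ℝ) * ((d - 4) / 2) + (4 - d) = 0 := by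
    push_cast
    ring
  rw [Real.inv_rpow (by positivity), ← Real.rpow_neg (by positivity), neg_neg,
    Real.mul_rpow (by positivity) hr, ← Real.rpow_natCast_mul ha.le, mul_right_comm,
    ← Real.rpow_add ha, hexp, Real.rpow_zero, one_mul]

variable {E F : Type*} [NormedAddCommGroup E] [InnerProductSpace ℝ E] [NormedAddCommGroup F]
  [NormedSpace ℝ F] {x : E}

theorem inv_norm_sq_mul_norm_inversion_add_inversion {w : E} (hx : x ≠ 0) (hw : w ≠ 0) :
    (‖x‖ ^ 2 * ‖inversion 0 1 x + inversion 0 1 w‖)⁻¹ = ‖w‖ / (‖x‖ * ‖x + w‖) := by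
  have hx' : ‖x‖ ≠ 0 := norm_ne_zero_iff.2 hx
  rw [norm_inversion_add_inversion hx hw, sq, mul_assoc, mul_div_assoc', mul_div_mul_left _ _ hx',
    mul_div_assoc', inv_div]

theorem laplacian_laplacian_kelvinTransform_eq [FiniteDimensional ℝ E] {g : F → F} {f : E → F}
    {r : ℝ} (hr : 0 ≤ r) (hx : x ≠ 0) (hf : ContDiffAt ℝ 4 f (inversion 0 1 x))
    (hsol : Δ (Δ f) (inversion 0 1 x) = r ^ (-(((finrank ℝ E : ℝ) + 4) / 2)) •
      g (r ^ (((finrank ℝ E : ℝ) - 4) / 2) • f (inversion 0 1 x))) :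
    Δ (Δ (kelvinTransform (4 - (finrank ℝ E : ℝ)) f)) x =
      ((‖x‖ ^ 2 * r)⁻¹) ^ (((finrank ℝ E : ℝ) + 4) / 2) •
        g (((‖x‖ ^ 2 * r)⁻¹) ^ (-(((finrank ℝ E : ℝ) - 4) / 2)) •
          kelvinTransform (4 - (finrank ℝ E : ℝ)) f x) := by
  have hx' : 0 < ‖x‖ := norm_pos_iff.2 hx
  rw [laplacian_laplacian_kelvinTransform hx hf, kelvinTransform, kelvinTransform, hsol, smul_smul,
    smul_smul, inv_sq_mul_rpow_add_four_div_two hx'.le hr,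
    inv_sq_mul_rpow_neg_sub_four_div_two hx' hr]

end KelvinEquation

section EuclideanSpace

variable {n : ℕ} {f : EuclideanSpace ℝ (Fin n) → ℝ} {x : EuclideanSpace ℝ (Fin n)}

theorem lap_eq_laplacian (hf : ContDiffAt ℝ 2 f x) : lap n f x = Δ f x := by
  have hDf : DifferentiableAt ℝ (fderiv ℝ f) x :=
    (hf.fderiv_right (m := 1) le_rfl).differentiableAt one_ne_zero
  rw [lap, laplacian_eq_sum_fderiv_fderiv (EuclideanSpace.basisFun (Fin n) ℝ)]
  refine Finset.sum_congr rfl fun i _ => ?_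
  rw [(hDf.hasFDerivAt.clm_apply (hasFDerivAt_const _ x)).fderiv]
  simp

theorem bilap_eq_laplacian_laplacian (hf : ContDiffAt ℝ 4 f x) :
    bilap n f x = Δ (Δ f) x := by
  have hlap : lap n f =ᶠ[𝓝 x] Δ f := by
    filter_upwards [hf.eventually (by simp)] with y hfy
    exact lap_eq_laplacian (hfy.of_le (by norm_num))
  have hΔf : ContDiffAt ℝ 2 (Δ f) x := contDiffAt_laplacian (hf.of_le (by norm_num))
  rw [bilap, lap_eq_laplacian (hΔf.congr_of_eventuallyEq hlap),
    (laplacian_congr_nhds hlap).eq_of_nhds]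

theorem bilap_comp_add_right {z : EuclideanSpace ℝ (Fin n)} (hf : ContDiffAt ℝ 4 f (x + z)) :
    bilap n (fun y => f (y + z)) x = bilap n f (x + z) := by
  rw [bilap_eq_laplacian_laplacian hf,
    bilap_eq_laplacian_laplacian (contDiffAt_comp_add_right hf),
    laplacian_comp_add_right, laplacian_comp_add_right]

theorem bilap_kelvinTransform_eq {g : ℝ → ℝ} {r : ℝ} (hr : 0 ≤ r) (hx : x ≠ 0)
    (hf : ContDiffAt ℝ 4 f (inversion 0 1 x))
    (hsol : bilap n f (inversion 0 1 x) =
      r ^ (-(((n : ℝ) + 4) / 2)) * g (r ^ (((n : ℝ) - 4) / 2) * f (inversion 0 1 x))) :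
    bilap n (kelvinTransform (4 - (n : ℝ)) f) x = ((‖x‖ ^ 2 * r)⁻¹) ^ (((n : ℝ) + 4) / 2) *
      g (((‖x‖ ^ 2 * r)⁻¹) ^ (-(((n : ℝ) - 4) / 2)) * kelvinTransform (4 - (n : ℝ)) f x) := by
  rw [bilap_eq_laplacian_laplacian hf] at hsol
  rw [bilap_eq_laplacian_laplacian (contDiffAt_kelvinTransform _ hx hf)]
  simpa using laplacian_laplacian_kelvinTransform_eq (g := g) hr hx hf (by simpa using hsol)

end EuclideanSpace

theorem stmt_18_general (n : ℕ) (g : ℝ → ℝ) (u : EuclideanSpace ℝ (Fin n) → ℝ)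
    (hu4 : ContDiffOn ℝ 4 u {(0 : EuclideanSpace ℝ (Fin n))}ᶜ)
    (hsol : ∀ x : EuclideanSpace ℝ (Fin n), x ≠ 0 →
      bilap n u x = ‖x‖ ^ (-(((n : ℝ) + 4) / 2)) * g (‖x‖ ^ (((n : ℝ) - 4) / 2) * u x))
    (z : EuclideanSpace ℝ (Fin n)) (hz : z ≠ 0)
    (zs : EuclideanSpace ℝ (Fin n)) (hzs : zs = (‖z‖ ^ 2)⁻¹ • z)
    (uz : EuclideanSpace ℝ (Fin n) → ℝ)
    (huz : ∀ x : EuclideanSpace ℝ (Fin n),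
      uz x = ‖x‖ ^ (-((n : ℝ) - 4)) * u ((‖x‖ ^ 2)⁻¹ • x + z))
    (k : EuclideanSpace ℝ (Fin n) → ℝ)
    (hk : ∀ x : EuclideanSpace ℝ (Fin n), k x = ‖zs‖ / (‖x‖ * ‖x + zs‖)) :
    (∀ x : EuclideanSpace ℝ (Fin n), x ≠ 0 → x ≠ -zs →
      bilap n uz x = (k x) ^ (((n : ℝ) + 4) / 2) * g ((k x) ^ (-(((n : ℝ) - 4) / 2)) * uz x)) ∧
    (∀ us : EuclideanSpace ℝ (Fin n) → ℝ,
      (∀ x : EuclideanSpace ℝ (Fin n), us x = ‖x‖ ^ (-((n : ℝ) - 4)) * u ((‖x‖ ^ 2)⁻¹ • x)) →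
      ∀ x : EuclideanSpace ℝ (Fin n), x ≠ 0 →
        bilap n us x = (‖x‖⁻¹) ^ (((n : ℝ) + 4) / 2) *
          g ((‖x‖⁻¹) ^ (-(((n : ℝ) - 4) / 2)) * us x)) := by
  have hkelvin {x w v} (hx : x ≠ 0) (hy : inversion 0 1 x + w ≠ 0)
      (hv : ∀ y, v y = ‖y‖ ^ (-((n : ℝ) - 4)) * u ((‖y‖ ^ 2)⁻¹ • y + w)) :
      bilap n v x = ((‖x‖ ^ 2 * ‖inversion 0 1 x + w‖)⁻¹) ^ (((n : ℝ) + 4) / 2) *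
        g (((‖x‖ ^ 2 * ‖inversion 0 1 x + w‖)⁻¹) ^ (-(((n : ℝ) - 4) / 2)) * v x) := by
    obtain rfl : v = kelvinTransform (4 - (n : ℝ)) fun y => u (y + w) := by
      ext y
      rw [hv, neg_sub, kelvinTransform, inversion_zero_one_apply, smul_eq_mul]
    have hu : ContDiffAt ℝ 4 u (inversion 0 1 x + w) :=
      hu4.contDiffAt (isOpen_compl_singleton.mem_nhds hy)
    exact bilap_kelvinTransform_eq (norm_nonneg _) hx (contDiffAt_comp_add_right hu)
      ((bilap_comp_add_right hu).trans (hsol _ hy))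
  constructor
  · intro x hx hxzs
    have hzs' : zs = inversion 0 1 z := hzs.trans (inversion_zero_one_apply z).symm
    have hzs0 : zs ≠ 0 := by simpa [hzs] using hz
    have hzinv : inversion 0 1 zs = z := by rw [hzs', inversion_inversion _ one_ne_zero]
    have hy : inversion 0 1 x + z ≠ 0 := by
      rw [← hzinv, ← norm_ne_zero_iff, norm_inversion_add_inversion hx hzs0]
      simp [hx, hzs0, add_eq_zero_iff_eq_neg, hxzs]
    rw [hkelvin hx hy huz, hk, ← inv_norm_sq_mul_norm_inversion_add_inversion hx hzs0, hzinv]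
  · intro us hus x hx
    have hxinv : (‖x‖ ^ 2 * ‖inversion 0 1 x + 0‖)⁻¹ = ‖x‖⁻¹ := by
      simp [inversion_zero_one_apply, norm_smul, sq, hx]
    have := hkelvin (w := 0) hx (by simpa [inversion_zero_one_apply] using hx) (by simpa using hus)
    rwa [hxinv] at this

theorem stmt_18 (n : ℕ) (hn : 5 ≤ n) (g : ℝ → ℝ) (hg : CondG n g)
    (u : EuclideanSpace ℝ (Fin n) → ℝ)
    (hu4 : ContDiffOn ℝ 4 u {(0 : EuclideanSpace ℝ (Fin n))}ᶜ)
    (hupos : ∀ x : EuclideanSpace ℝ (Fin n), x ≠ 0 → 0 < u x)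
    (hsol : ∀ x : EuclideanSpace ℝ (Fin n), x ≠ 0 →
      bilap n u x = ‖x‖ ^ (-(((n : ℝ) + 4) / 2)) * g (‖x‖ ^ (((n : ℝ) - 4) / 2) * u x))
    (z : EuclideanSpace ℝ (Fin n)) (hz : z ≠ 0)
    (zs : EuclideanSpace ℝ (Fin n)) (hzs : zs = (‖z‖ ^ 2)⁻¹ • z)
    (uz : EuclideanSpace ℝ (Fin n) → ℝ)
    (huz : ∀ x : EuclideanSpace ℝ (Fin n),
      uz x = ‖x‖ ^ (-((n : ℝ) - 4)) * u ((‖x‖ ^ 2)⁻¹ • x + z))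
    (k : EuclideanSpace ℝ (Fin n) → ℝ)
    (hk : ∀ x : EuclideanSpace ℝ (Fin n), k x = ‖zs‖ / (‖x‖ * ‖x + zs‖)) :
    (∀ x : EuclideanSpace ℝ (Fin n), x ≠ 0 → x ≠ -zs →
      bilap n uz x = (k x) ^ (((n : ℝ) + 4) / 2) * g ((k x) ^ (-(((n : ℝ) - 4) / 2)) * uz x)) ∧
    (∀ us : EuclideanSpace ℝ (Fin n) → ℝ,
      (∀ x : EuclideanSpace ℝ (Fin n), us x = ‖x‖ ^ (-((n : ℝ) - 4)) * u ((‖x‖ ^ 2)⁻¹ • x)) →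
      ∀ x : EuclideanSpace ℝ (Fin n), x ≠ 0 →
        bilap n us x = (‖x‖⁻¹) ^ (((n : ℝ) + 4) / 2) *
          g ((‖x‖⁻¹) ^ (-(((n : ℝ) - 4) / 2)) * us x)) := by
  exact stmt_18_general n g u hu4 hsol z hz zs hzs uz huz k hk
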